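/- arXiv:2503.00316 — 3 statements merged into one kernel-verified Lean document; each statement's English description precedes it below -/
import Mathlib

section
/- Let X be a compact metric space and f : X → X a surjective continuous map. Then for any x ∈ X and ε > 0, if V_ε^s(x) is dense in X, then V_ε^s(f^i(x)) is dense in X for every i ≥ 0. -/
open Filter Topology

/-- `V_ε^s(x)`: points whose forward orbit eventually stays ε-close (in limsup) to that of `x`. -/
def Vs {X : Type*} [MetricSpace X] (f : X → X) (x : X) (ε : ℝ) : Set X :=
  {y | Filter.limsup (fun i : ℕ => dist (f^[i] x) (f^[i] y)) Filter.atTop ≤ ε}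

open Classical in
/-- A DC1-`n`-`δ`-scrambled tuple. -/
def DC1Scrambled {X : Type*} [MetricSpace X] (f : X → X) {n : ℕ} (δ : ℝ)
    (x : Fin n → X) : Prop :=
  Filter.limsup (fun m : ℕ =>
      ((((Finset.range m).filter fun i => ∀ j k : Fin n, j < k →
        δ < dist (f^[i] (x j)) (f^[i] (x k))).card : ℝ) / m)) Filter.atTop = 1 ∧
  ∀ ε : ℝ, 0 < ε → Filter.limsup (fun m : ℕ =>
      ((((Finset.range m).filter fun i => ∀ j k : Fin n, j < k →
        dist (f^[i] (x j)) (f^[i] (x k)) < ε).card : ℝ) / m)) Filter.atTop = 1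

/-- `S` is a distal set for `f`. -/
def DistalSet {X : Type*} [MetricSpace X] (f : X → X) (S : Set X) : Prop :=
  ∀ n : ℕ, 2 ≤ n → ∀ x : Fin n → X, (∀ j, x j ∈ S) → Function.Injective x →
    ∃ c : ℝ, 0 < c ∧ ∀ i : ℕ, ∀ j k : Fin n, j < k → c ≤ dist (f^[i] (x j)) (f^[i] (x k))

/-- `f` restricted to `Λ` is minimal: `Λ` is the orbit closure of each of its points. -/
def MinimalOn {X : Type*} [TopologicalSpace X] (f : X → X) (Λ : Set X) : Prop :=
  ∀ x ∈ Λ, closure (Set.range fun i : ℕ => f^[i] x) = Λ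

/-- `f` restricted to `Λ` is equicontinuous. -/
def EquicontOnSet {X : Type*} [MetricSpace X] (f : X → X) (Λ : Set X) : Prop :=
  ∀ ε : ℝ, 0 < ε → ∃ δ : ℝ, 0 < δ ∧ ∀ x ∈ Λ, ∀ y ∈ Λ, dist x y ≤ δ →
    ∀ i : ℕ, dist (f^[i] x) (f^[i] y) ≤ ε

/-- Topological transitivity. -/
def IsTransitive {Z : Type*} [TopologicalSpace Z] (h : Z → Z) : Prop :=
  ∀ U V : Set Z, IsOpen U → IsOpen V → U.Nonempty → V.Nonempty →
    ∃ i : ℕ, ∃ z ∈ U, h^[i] z ∈ V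

/-- `N(x,ε)` : times at which the orbit of `x` returns ε-close to `x`. -/
def retTimes {X : Type*} [MetricSpace X] (f : X → X) (x : X) (ε : ℝ) : Set ℕ :=
  {i : ℕ | dist x (f^[i] x) ≤ ε}

/-- `R(f,𝓕)`: the set of `𝓕`-recurrent points. -/
def FRecurrent {X : Type*} [MetricSpace X] (f : X → X) (F : Set (Set ℕ)) : Set X :=
  {x | ∀ ε : ℝ, 0 < ε → retTimes f x ε ∈ F}

/-- The dual family `𝓕*`. -/
def dualFamily (F : Set (Set ℕ)) : Set (Set ℕ) :=
  {A | ∀ B ∈ F, (A ∩ B).Nonempty}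

/-- `Δ(A)`, the difference set of `A`. -/
def deltaSet (A : Set ℕ) : Set ℕ :=
  {i | ∃ j ∈ A, ∃ k ∈ A, j ≤ k ∧ i = k - j}

/-- `Δ(𝓕)`. -/
def deltaFamily (F : Set (Set ℕ)) : Set (Set ℕ) :=
  {B | ∃ A ∈ F, 0 ∈ A ∧ deltaSet A ⊆ B}

/-- `𝓕`-transitivity: `N(U,V) ∈ 𝓕` for all nonempty open `U, V`. -/
def FTransitive {X : Type*} [TopologicalSpace X] (f : X → X) (F : Set (Set ℕ)) : Prop :=
  ∀ U V : Set X, IsOpen U → IsOpen V → U.Nonempty → V.Nonempty →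
    {i : ℕ | ∃ x ∈ U, f^[i] x ∈ V} ∈ F

section ForwardInvariance

variable {X : Type*} [MetricSpace X] {f : X → X} {x : X} {ε : ℝ}

theorem map_mem_Vs_map_iff {y : X} : f y ∈ Vs f (f x) ε ↔ y ∈ Vs f x ε := by
  simp only [Vs, Set.mem_ofPred_eq, ← Function.iterate_succ_apply]
  rw [limsup_nat_add (fun n : ℕ => dist (f^[n] x) (f^[n] y)) 1]

theorem dense_Vs_map (hf : Continuous f) (hrange : DenseRange f) (hdense : Dense (Vs f x ε)) :
    Dense (Vs f (f x) ε) :=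
  (hrange.dense_image hf hdense).mono <| Set.image_subset_iff.2 fun _ => map_mem_Vs_map_iff.2

/- The real-valued `limsup` of an unbounded sequence of distances is `0`, so for `0 ≤ ε` the set
`Vs f x ε` also contains every `y` for which `dist (f^[n] x) (f^[n] y)` is unbounded in `n`. -/
theorem dense_Vs_iterate_general (hf : Continuous f) (hrange : DenseRange f)
    (hdense : Dense (Vs f x ε)) (i : ℕ) : Dense (Vs f (f^[i] x) ε) := by
  induction i with
  | zero => exact hdense
  | succ i ih =>
    rw [Function.iterate_succ_apply']
    exact dense_Vs_map hf hrange ih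

end ForwardInvariance

/-- for surjective `f`, if `V_ε^s(x)` is dense, then so is every
`V_ε^s(f^i(x))`. -/
theorem dense_Vs_iterate {X : Type*} [MetricSpace X] [CompactSpace X]
    (f : X → X) (hf : Continuous f) (hsurj : Function.Surjective f)
    (x : X) (ε : ℝ) (hε : 0 < ε) (hdense : Dense (Vs f x ε)) :
    ∀ i : ℕ, Dense (Vs f (f^[i] x) ε) :=
  dense_Vs_iterate_general hf hsurj.denseRange hdense
end

section
/- Let X be a compact metric space and f : X → X a continuous map. Then f is 𝓕_rr*-transitive if and only if f is totally transitive, i.e., f^k is transitive for every k ≥ 1. -/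
open Filter Topology

/-- The Furstenberg family `𝓕_rr` of sets containing some `kℕ₀`. -/
def Frr : Set (Set ℕ) :=
  {A | ∃ k : ℕ, 1 ≤ k ∧ ∀ m : ℕ, k * m ∈ A}

/-- The set `N(U, V)` of times `i` at which `f^i(U)` meets `V`. The encoding makes `FTransitive f F`
and `IsTransitive f` unfold to `N(U, V) ∈ F` and `(N(U, V)).Nonempty` for all nonempty open
`U`, `V`. -/
def hittingTimes {X : Type*} (f : X → X) (U V : Set X) : Set ℕ :=
  {i | ∃ x ∈ U, f^[i] x ∈ V}

theorem mem_hittingTimes_iterate {X : Type*} {f : X → X} {U V : Set X} {k m : ℕ} :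
    m ∈ hittingTimes f^[k] U V ↔ k * m ∈ hittingTimes f U V := by
  simp only [hittingTimes, Set.mem_ofPred_eq, Function.iterate_mul]

theorem mem_dualFamily_Frr {A : Set ℕ} :
    A ∈ dualFamily Frr ↔ ∀ k : ℕ, 1 ≤ k → ∃ m : ℕ, k * m ∈ A := by
  constructor
  · intro hA k hk
    obtain ⟨_, hmA, m, rfl⟩ := hA (Set.range (k * ·)) ⟨k, hk, Set.mem_range_self⟩
    exact ⟨m, hmA⟩
  · rintro hA B ⟨k, hk, hB⟩
    obtain ⟨m, hmA⟩ := hA k hk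
    exact ⟨k * m, hmA, hB m⟩

theorem hittingTimes_mem_dualFamily_Frr {X : Type*} {f : X → X} {U V : Set X} :
    hittingTimes f U V ∈ dualFamily Frr ↔
      ∀ k : ℕ, 1 ≤ k → (hittingTimes f^[k] U V).Nonempty := by
  simp only [mem_dualFamily_Frr, Set.Nonempty, mem_hittingTimes_iterate]

theorem FrrDual_transitive_iff_totally_transitive_general
    {X : Type*} [TopologicalSpace X] (f : X → X) :
    FTransitive f (dualFamily Frr) ↔ ∀ k : ℕ, 1 ≤ k → IsTransitive f^[k] := by
  constructor
  · intro h k hk U V hU hV hUne hVne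
    exact hittingTimes_mem_dualFamily_Frr.mp (h U V hU hV hUne hVne) k hk
  · intro h U V hU hV hUne hVne
    exact hittingTimes_mem_dualFamily_Frr.mpr fun k hk => h k hk U V hU hV hUne hVne

/-- `f` is `𝓕_rr*`-transitive iff `f` is totally transitive. -/
theorem FrrDual_transitive_iff_totally_transitive
    {X : Type*} [MetricSpace X] [CompactSpace X] (f : X → X) (hf : Continuous f) :
    FTransitive f (dualFamily Frr) ↔ ∀ k : ℕ, 1 ≤ k → IsTransitive f^[k] :=
  FrrDual_transitive_iff_totally_transitive_general f
end

section
/- The Furstenberg families 𝓕_rr, 𝓕_b, 𝓕_s, 𝓕_t satisfy the inclusions 𝓕_rr ⊆ Δ(𝓕_b) ⊆ Δ(𝓕_s) ⊆ 𝓕_s and consequently 𝓕_t ⊆ Δ(𝓕_s)* ⊆ Δ(𝓕_b)* ⊆ 𝓕_rr*; in particular, for any continuous self-map f of a compact metric space X, if f is 𝓕_t-transitive then f is Δ(𝓕_s)*-transitive, if f is Δ(𝓕_s)*-transitive then f is Δ(𝓕_b)*-transitive, and if f is Δ(𝓕_b)*-transitive then f is 𝓕_rr*-transitive. -/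
/-!
The multiples of `k` are the return times of the rotation by `1 / k` on the cyclic subgroup it
generates in the circle, and they are closed under differences, whence `𝓕_rr ⊆ Δ(𝓕_b)`. For
`𝓕_b ⊆ 𝓕_s`, the preimages of a ball under the iterates of a minimal map cover the compact space,
and a finite subcover bounds the gaps between consecutive returns. If `0 ∈ A` then `A ⊆ Δ(A)`, so
`Δ` shrinks every family closed under supersets, such as `𝓕_s`. Finally, a thick set meets every
syndetic set, and passing to the dual family reverses inclusions.
-/

open Filter Topology

/-- The Furstenberg family `𝓕_b` of sets containing some return-time set `N(y,δ)` of a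
minimal equicontinuous system. -/
def Fb : Set (Set ℕ) :=
  {A | ∃ (Y : Type) (_ : MetricSpace Y) (_ : CompactSpace Y) (g : Y → Y),
    Continuous g ∧
    (∀ y : Y, closure (Set.range fun i : ℕ => g^[i] y) = Set.univ) ∧
    (∀ ε : ℝ, 0 < ε → ∃ δ : ℝ, 0 < δ ∧ ∀ u v : Y, dist u v ≤ δ →
      ∀ i : ℕ, dist (g^[i] u) (g^[i] v) ≤ ε) ∧
    ∃ (y : Y) (δ : ℝ), 0 < δ ∧ {i : ℕ | dist y (g^[i] y) ≤ δ} ⊆ A}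

/-- The Furstenberg family `𝓕_s` of syndetic sets. -/
def Fs : Set (Set ℕ) :=
  {A | ∃ k : ℕ, 1 ≤ k ∧ ∀ i : ℕ, ∃ j ∈ A, i ≤ j ∧ j < i + k}

/-- The Furstenberg family `𝓕_t` of thick sets. -/
def Ft : Set (Set ℕ) :=
  {B | ∀ j : ℕ, 1 ≤ j → ∃ i : ℕ, ∀ l : ℕ, l < j → i + l ∈ B}

theorem subset_deltaSet {A : Set ℕ} (h0 : 0 ∈ A) : A ⊆ deltaSet A :=
  fun i hi => ⟨0, h0, i, hi, Nat.zero_le i, rfl⟩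

theorem deltaSet_setOfPred_dvd_subset (k : ℕ) : deltaSet {i | k ∣ i} ⊆ {i | k ∣ i} := by
  rintro _ ⟨j, hj, l, hl, -, rfl⟩
  exact Nat.dvd_sub hl hj

theorem deltaFamily_mono : Monotone deltaFamily :=
  fun _ _ hFG _ ⟨A, hA, hAB⟩ => ⟨A, hFG hA, hAB⟩

theorem deltaFamily_subset_of_isUpperSet {F : Set (Set ℕ)} (hF : IsUpperSet F) :
    deltaFamily F ⊆ F :=
  fun _ ⟨_, hA, h0, hAB⟩ => hF ((subset_deltaSet h0).trans hAB) hA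

theorem dualFamily_anti : Antitone dualFamily :=
  fun _ _ hFG _ hA B hB => hA B (hFG hB)

theorem FTransitive.mono {X : Type*} [TopologicalSpace X] {f : X → X} {F G : Set (Set ℕ)}
    (hFG : F ⊆ G) (hf : FTransitive f F) : FTransitive f G :=
  fun U V hU hV hU' hV' => hFG (hf U V hU hV hU' hV')

theorem isUpperSet_Fs : IsUpperSet Fs :=
  fun _ _ hAB ⟨k, hk, hA⟩ => ⟨k, hk, fun i => (hA i).imp fun _ hj => ⟨hAB hj.1, hj.2⟩⟩

theorem Ft_subset_dualFamily_Fs : Ft ⊆ dualFamily Fs := by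
  rintro B hB A ⟨k, hk, hA⟩
  obtain ⟨i, hi⟩ := hB k hk
  obtain ⟨j, hj, hij, hjk⟩ := hA i
  obtain ⟨l, rfl⟩ := Nat.exists_eq_add_of_le hij
  exact ⟨i + l, hi l (by lia), hj⟩

theorem setOfPred_iterate_mem_mem_Fs {X : Type*} [TopologicalSpace X] [CompactSpace X] {f : X → X}
    (hf : Continuous f) {U : Set X} (hU : IsOpen U) (hvisit : ∀ z, ∃ i, f^[i] z ∈ U) (x : X) :
    {i | f^[i] x ∈ U} ∈ Fs := by
  obtain ⟨t, ht⟩ := isCompact_univ.elim_finite_subcover (fun i => f^[i] ⁻¹' U)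
    (fun i => hU.preimage (hf.iterate i)) fun z _ => Set.mem_iUnion.2 (hvisit z)
  refine ⟨t.sup id + 1, Nat.le_add_left 1 _, fun i => ?_⟩
  obtain ⟨n, hnt, hn⟩ := Set.mem_iUnion₂.1 (ht (Set.mem_univ (f^[i] x)))
  have hn_le : n ≤ t.sup id := Finset.le_sup (f := id) hnt
  refine ⟨n + i, ?_, by lia, by lia⟩
  rwa [Set.mem_preimage, ← Function.iterate_add_apply] at hn

theorem Fb_subset_Fs : Fb ⊆ Fs := by
  rintro A ⟨Y, _, _, g, hg, hmin, -, y, δ, hδ, hA⟩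
  have hvisit (z : Y) : ∃ i, g^[i] z ∈ Metric.ball y δ := by
    have hdense : DenseRange fun i => g^[i] z := dense_iff_closure_eq.2 (hmin z)
    exact hdense.exists_mem_open Metric.isOpen_ball ⟨y, Metric.mem_ball_self hδ⟩
  refine isUpperSet_Fs ?_ (setOfPred_iterate_mem_mem_Fs hg Metric.isOpen_ball hvisit y)
  exact fun i hi => hA (Metric.mem_ball'.1 hi).le

theorem setOfPred_iterate_eq_mem_Fb {Y : Type} [MetricSpace Y] [Finite Y] {g : Y → Y}
    (hg : ∀ u v, ∃ i, g^[i] u = v) (y : Y) : {i | g^[i] y = y} ∈ Fb := by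
  obtain ⟨r, hr, hsep⟩ :=
    (Metric.uniformSpace_eq_bot (α := Y)).1 DiscreteUniformity.eq_bot
  have eq_of_dist_le {u v : Y} (huv : dist u v ≤ r / 2) : u = v :=
    hsep.eq (huv.trans_lt (half_lt_self hr)).not_ge
  have hminimal (u : Y) : closure (Set.range fun i => g^[i] u) = Set.univ :=
    DenseRange.closure_range (Function.Surjective.denseRange (hg u))
  refine ⟨Y, inferInstance, inferInstance, g, continuous_of_discreteTopology, hminimal,
    fun ε hε => ⟨r / 2, half_pos hr, fun u v huv i => ?_⟩,
    y, r / 2, half_pos hr, fun i hi => (eq_of_dist_le hi).symm⟩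
  rw [eq_of_dist_le huv, dist_self]
  exact hε.le

theorem setOfPred_addOrderOf_dvd_mem_Fb {G : Type} [MetricSpace G] [AddGroup G] {a : G}
    (ha : IsOfFinAddOrder a) : {i | addOrderOf a ∣ i} ∈ Fb := by
  have : Finite (AddSubgroup.zmultiples a) := ha.finite_zmultiples
  let b : AddSubgroup.zmultiples a := ⟨a, AddSubgroup.mem_zmultiples a⟩
  have htransitive (u v : AddSubgroup.zmultiples a) : ∃ i, (b + ·)^[i] u = v := by
    obtain ⟨i, hi⟩ := ha.mem_multiples_iff_mem_zmultiples.2 (v - u).2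
    have hnsmul : i • b = v - u := Subtype.ext hi
    exact ⟨i, by rw [add_left_iterate_apply, hnsmul, sub_add_cancel]⟩
  have hreturn : {i | (b + ·)^[i] 0 = 0} = {i | addOrderOf a ∣ i} := by
    simp only [add_left_iterate_apply_zero, ← addOrderOf_dvd_iff_nsmul_eq_zero,
      b, AddSubgroup.addOrderOf_mk]
  exact hreturn ▸ setOfPred_iterate_eq_mem_Fb htransitive 0

theorem setOfPred_dvd_mem_Fb {k : ℕ} (hk : 0 < k) : {i | k ∣ i} ∈ Fb := by
  have hord : addOrderOf (((1 : ℝ) / k : ℝ) : UnitAddCircle) = k :=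
    AddCircle.addOrderOf_period_div hk
  have hfin : IsOfFinAddOrder (((1 : ℝ) / k : ℝ) : UnitAddCircle) :=
    addOrderOf_pos_iff.1 (hord.symm ▸ hk)
  simpa only [hord] using setOfPred_addOrderOf_dvd_mem_Fb hfin

theorem Frr_subset_deltaFamily_Fb : Frr ⊆ deltaFamily Fb := by
  rintro B ⟨k, hk, hB⟩
  refine ⟨{i | k ∣ i}, setOfPred_dvd_mem_Fb hk, dvd_zero k,
    (deltaSet_setOfPred_dvd_subset k).trans ?_⟩
  rintro _ ⟨m, rfl⟩
  exact hB m

theorem family_inclusions_general :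
    Frr ⊆ deltaFamily Fb ∧ deltaFamily Fb ⊆ deltaFamily Fs ∧ deltaFamily Fs ⊆ Fs ∧
    Ft ⊆ dualFamily (deltaFamily Fs) ∧
    dualFamily (deltaFamily Fs) ⊆ dualFamily (deltaFamily Fb) ∧
    dualFamily (deltaFamily Fb) ⊆ dualFamily Frr ∧
    ∀ (X : Type*) [TopologicalSpace X] (f : X → X),
      (FTransitive f Ft → FTransitive f (dualFamily (deltaFamily Fs))) ∧
      (FTransitive f (dualFamily (deltaFamily Fs)) →
        FTransitive f (dualFamily (deltaFamily Fb))) ∧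
      (FTransitive f (dualFamily (deltaFamily Fb)) → FTransitive f (dualFamily Frr)) := by
  have hΔFs : deltaFamily Fs ⊆ Fs := deltaFamily_subset_of_isUpperSet isUpperSet_Fs
  have hFt : Ft ⊆ dualFamily (deltaFamily Fs) :=
    Ft_subset_dualFamily_Fs.trans (dualFamily_anti hΔFs)
  have hΔ : deltaFamily Fb ⊆ deltaFamily Fs := deltaFamily_mono Fb_subset_Fs
  have hFrr : Frr ⊆ deltaFamily Fb := Frr_subset_deltaFamily_Fb
  exact ⟨hFrr, hΔ, hΔFs, hFt, dualFamily_anti hΔ, dualFamily_anti hFrr, fun X _ f =>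
    ⟨.mono hFt, .mono (dualFamily_anti hΔ), .mono (dualFamily_anti hFrr)⟩⟩

/-- `𝓕_rr ⊆ Δ(𝓕_b) ⊆ Δ(𝓕_s) ⊆ 𝓕_s`, hence
`𝓕_t ⊆ Δ(𝓕_s)* ⊆ Δ(𝓕_b)* ⊆ 𝓕_rr*`, and the corresponding implications between the
transitivity notions (weakly mixing ⟹ scattering ⟹ weakly scattering ⟹ totally
transitive) hold. -/
theorem family_inclusions :
    Frr ⊆ deltaFamily Fb ∧ deltaFamily Fb ⊆ deltaFamily Fs ∧ deltaFamily Fs ⊆ Fs ∧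
    Ft ⊆ dualFamily (deltaFamily Fs) ∧
    dualFamily (deltaFamily Fs) ⊆ dualFamily (deltaFamily Fb) ∧
    dualFamily (deltaFamily Fb) ⊆ dualFamily Frr ∧
    ∀ (X : Type) (_ : MetricSpace X) (_ : CompactSpace X) (f : X → X), Continuous f →
      (FTransitive f Ft → FTransitive f (dualFamily (deltaFamily Fs))) ∧
      (FTransitive f (dualFamily (deltaFamily Fs)) →
        FTransitive f (dualFamily (deltaFamily Fb))) ∧
      (FTransitive f (dualFamily (deltaFamily Fb)) → FTransitive f (dualFamily Frr)) := by
  obtain ⟨hFrr, hΔ, hΔFs, hFt, hdualΔ, hdualFrr, htrans⟩ := family_inclusions_general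
  exact ⟨hFrr, hΔ, hΔFs, hFt, hdualΔ, hdualFrr, fun X _ _ f _ => htrans X f⟩
end
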